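/- arXiv:2007.02405 — 2 statements merged into one kernel-verified Lean document; each statement's English description precedes it below -/
import Mathlib

section
/- Let C be an [n, k, d]_q MDS code with minimum distance d ≥ 5, and let w be a natural number with d - 2 ≤ w ≤ n. Then the overall number A_w^Σ(V^{(2)}) of Hamming-weight-w vectors lying in cosets of C of weight exactly 2 satisfies A_w^Σ(V^{(2)}) = C(n,w) (q-1)^2 · [ C(n,2) · ∑_{j=0}^{w+1-d} (-1)^j C(w,j) q^{w+1-d-j} + ε · C(w,2) C(w-3, d-4) ] + ε · C(n,w) C(w, d-2) C(n-d+2, 2) (q-1), as an identity of integers. -/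
open Finset

/-- The weight of the coset `x + C` of the linear code `C ⊆ F_q^n`, i.e. the smallest
Hamming weight of a vector in `x + C`; equivalently the Hamming distance from `x` to `C`. -/
noncomputable def cosetWeight {F : Type*} [Field F] [Fintype F] [DecidableEq F] {n : ℕ}
    (C : Submodule F (Fin n → F)) (x : Fin n → F) : ℕ :=
  sInf {m : ℕ | ∃ c ∈ C, hammingNorm (x - c) = m}

/-- `A_w(C)`: the number of codewords of `C` of Hamming weight `w`. -/
noncomputable def numCodewordsOfWeight {F : Type*} [Field F] [Fintype F] [DecidableEq F] {n : ℕ}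
    (C : Submodule F (Fin n → F)) (w : ℕ) : ℕ :=
  {x : Fin n → F | x ∈ C ∧ hammingNorm x = w}.ncard

/-- `A_w^Σ(V^{(W)})`: the overall number of Hamming-weight-`w` vectors of `F_q^n` lying in
cosets of `C` of weight exactly `W`. -/
noncomputable def numVectorsCosetExact {F : Type*} [Field F] [Fintype F] [DecidableEq F] {n : ℕ}
    (C : Submodule F (Fin n → F)) (w W : ℕ) : ℕ :=
  {x : Fin n → F | hammingNorm x = w ∧ cosetWeight C x = W}.ncard

/-- `A_w^Σ(V^{≤W})`: the overall number of Hamming-weight-`w` vectors of `F_q^n` lying in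
cosets of `C` of weight at most `W`. -/
noncomputable def numVectorsCosetLe {F : Type*} [Field F] [Fintype F] [DecidableEq F] {n : ℕ}
    (C : Submodule F (Fin n → F)) (w W : ℕ) : ℕ :=
  {x : Fin n → F | hammingNorm x = w ∧ cosetWeight C x ≤ W}.ncard

/-- The code `C` has minimum distance `d`: every nonzero codeword has Hamming weight at
least `d`, and some nonzero codeword has Hamming weight exactly `d`. -/
def HasMinDist {F : Type*} [Field F] [Fintype F] [DecidableEq F] {n : ℕ}
    (C : Submodule F (Fin n → F)) (d : ℕ) : Prop :=
  (∀ c ∈ C, c ≠ 0 → d ≤ hammingNorm c) ∧ ∃ c ∈ C, c ≠ 0 ∧ hammingNorm c = d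

/-- The code `C` has covering radius `R`: every vector of `F_q^n` is at Hamming distance at
most `R` from `C` and some vector is at Hamming distance exactly `R` from `C`. -/
def HasCoveringRadius {F : Type*} [Field F] [Fintype F] [DecidableEq F] {n : ℕ}
    (C : Submodule F (Fin n → F)) (R : ℕ) : Prop :=
  (∀ x : Fin n → F, cosetWeight C x ≤ R) ∧ ∃ x : Fin n → F, cosetWeight C x = R

/-- `V_m(t) = ∑_{i=0}^t (q-1)^i C(m,i)`, the volume of a Hamming sphere of radius `t`
in `F_q^m`, as a rational number. -/
def sphereVol (q m t : ℕ) : ℚ :=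
  ∑ i ∈ Finset.range (t + 1), ((q : ℚ) - 1) ^ i * (m.choose i : ℚ)

/-!
Since `d > 4`, a coset contains at most one vector `e` of weight `2`, so a word in a coset of
weight `2` is `e + c` for exactly one such `e` and one codeword `c`.  For an MDS code the number
of pairs `(e, c)` with `e + c` supported in `S` depends only on `#S`.  If `#S ≥ d - 1`, the
projection of the code onto the complement of `S` is onto, hence each `e` has `q ^ (#S + 1 - d)`
partners.  If `#S < d - 1`, the codeword `c = 0` contributes `C(#S, 2) (q - 1) ^ 2` pairs, and
another `c` is possible only for `#S = d - 2`, where it has weight `d` and support `S ∪ supp e`.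
Inclusion–exclusion over supports turns these counts into the number of words of weight `w`, and
the contribution of `c = 0` collapses by an alternating sum of binomial coefficients.
-/

section Combinatorics

variable {α ι : Type*} [DecidableEq ι]

theorem sum_Icc_neg_one_pow_card_add_card (A U : Finset ι) :
    ∑ S ∈ Icc A U, (-1 : ℤ) ^ (#U + #S) = if A = U then 1 else 0 := by
  by_cases hAU : A ⊆ U
  · have hsum : ∑ S ∈ Icc A U, (-1 : ℤ) ^ (#U + #S) = ∑ R ∈ (U \ A).powerset, (-1 : ℤ) ^ #R := by
      refine sum_nbij' (U \ ·) (U \ ·) ?_ ?_ ?_ ?_ ?_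
      · intro S hS
        exact mem_powerset.2 (sdiff_subset_sdiff Subset.rfl (mem_Icc.1 hS).1)
      · intro R hR
        refine mem_Icc.2 ⟨subset_sdiff.2 ⟨hAU, ?_⟩, sdiff_subset⟩
        exact (subset_sdiff.1 (mem_powerset.1 hR)).2.symm
      · intro S hS
        exact Finset.sdiff_sdiff_eq_self (mem_Icc.1 hS).2
      · intro R hR
        exact Finset.sdiff_sdiff_eq_self (subset_sdiff.1 (mem_powerset.1 hR)).1
      · intro S hS
        rw [← card_sdiff_add_card_eq_card (mem_Icc.1 hS).2, add_assoc, pow_add, ← two_mul, pow_mul,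
          neg_one_sq, one_pow, mul_one]
    rw [hsum, sum_powerset_neg_one_pow_card]
    simp only [sdiff_eq_empty_iff_subset, subset_antisymm_iff (a := A), hAU, true_and]
  · rw [Icc_eq_empty hAU, sum_empty, if_neg fun h => hAU h.subset]

theorem card_filter_eq_eq_sum_powerset (P : Finset α) (f : α → Finset ι) (U : Finset ι) :
    (#{a ∈ P | f a = U} : ℤ) =
      ∑ S ∈ U.powerset, (-1 : ℤ) ^ (#U + #S) * (#{a ∈ P | f a ⊆ S} : ℤ) := by
  calc (#{a ∈ P | f a = U} : ℤ)
      = ∑ a ∈ P, ∑ S ∈ Icc (f a) U, (-1 : ℤ) ^ (#U + #S) := by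
        simp only [sum_Icc_neg_one_pow_card_add_card, natCast_card_filter]
    _ = ∑ S ∈ U.powerset, ∑ a ∈ P with f a ⊆ S, (-1 : ℤ) ^ (#U + #S) := by
        refine sum_comm' fun a S => ?_
        simp only [mem_Icc, mem_filter, mem_powerset]
        tauto
    _ = ∑ S ∈ U.powerset, (-1 : ℤ) ^ (#U + #S) * (#{a ∈ P | f a ⊆ S} : ℤ) := by
        simp only [sum_const, nsmul_eq_mul, mul_comm]

theorem card_filter_card_eq_of_card_filter_subset [Fintype ι] (P : Finset α) (f : α → Finset ι)
    {φ : ℕ → ℤ} (hφ : ∀ m (S : Finset ι), #S = m → (#{a ∈ P | f a ⊆ S} : ℤ) = φ m) (w : ℕ) :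
    (#{a ∈ P | #(f a) = w} : ℤ) =
      (Fintype.card ι).choose w *
        ∑ m ∈ range (w + 1), (-1 : ℤ) ^ (w + m) * w.choose m * φ m := by
  have hfiber : ∀ U ∈ powersetCard w (univ : Finset ι), (#{a ∈ {a ∈ P | #(f a) = w} | f a = U} : ℤ)
      = ∑ m ∈ range (w + 1), (-1 : ℤ) ^ (w + m) * w.choose m * φ m := by
    intro U hU
    obtain rfl : #U = w := (mem_powersetCard.1 hU).2
    have hfilter : {a ∈ {a ∈ P | #(f a) = #U} | f a = U} = {a ∈ P | f a = U} := by
      rw [filter_filter]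
      exact filter_congr fun a _ => and_iff_right_of_imp (congrArg card)
    simp only [hfilter, card_filter_eq_eq_sum_powerset, hφ _ _ rfl]
    rw [sum_powerset_apply_card fun m => (-1 : ℤ) ^ (#U + m) * φ m]
    refine sum_congr rfl fun m _ => ?_
    rw [nsmul_eq_mul]
    ring
  have hmaps : ∀ a ∈ {a ∈ P | #(f a) = w}, f a ∈ powersetCard w univ :=
    fun a ha => mem_powersetCard.2 ⟨subset_univ _, (mem_filter.1 ha).2⟩
  rw [card_eq_sum_card_fiberwise hmaps, Nat.cast_sum, sum_congr rfl hfiber, sum_const,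
    card_powersetCard, card_univ, nsmul_eq_mul]

end Combinatorics

section AlternatingSums

theorem sum_range_neg_one_pow_mul_choose_mul_choose {W r w : ℕ} (hWr : W ≤ r) (hWw : W < w) :
    ∑ m ∈ range (r + 1), (-1 : ℤ) ^ m * w.choose m * m.choose W =
      (-1) ^ r * w.choose W * (w - W - 1).choose (r - W) := by
  obtain ⟨s, rfl⟩ := Nat.exists_eq_add_of_le hWr
  obtain ⟨N, rfl⟩ := Nat.exists_eq_add_of_lt hWw
  have hlow : ∑ m ∈ range W, (-1 : ℤ) ^ m * (W + N + 1).choose m * m.choose W = 0 :=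
    sum_eq_zero fun m hm => by simp [Nat.choose_eq_zero_of_lt (mem_range.1 hm)]
  have hterm : ∀ i, ((W + N + 1).choose (W + i) * (W + i).choose W : ℤ) =
      (W + N + 1).choose W * (N + 1).choose i := by
    intro i
    have := Nat.choose_mul (n := W + N + 1) (Nat.le_add_right W i)
    rw [Nat.add_sub_cancel_left, add_assoc, Nat.add_sub_cancel_left] at this
    exact_mod_cast this
  calc ∑ m ∈ range (W + s + 1), (-1 : ℤ) ^ m * (W + N + 1).choose m * m.choose W
      = ∑ i ∈ range (s + 1), (-1 : ℤ) ^ (W + i) * (W + N + 1).choose (W + i) *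
          (W + i).choose W := by
        rw [add_assoc, sum_range_add, hlow, zero_add]
    _ = (-1) ^ W * (W + N + 1).choose W *
          ∑ i ∈ range (s + 1), (-1 : ℤ) ^ i * (N + 1).choose i := by
        rw [mul_sum]
        refine sum_congr rfl fun i _ => ?_
        rw [mul_assoc, hterm, pow_add]
        ring
    _ = (-1) ^ (W + s) * (W + N + 1).choose W * (W + N + 1 - W - 1).choose (W + s - W) := by
        rw [Int.alternating_sum_range_choose_eq_choose, show W + N + 1 - W - 1 = N by omega,
          Nat.add_sub_cancel_left, pow_add]
        ring

theorem sum_Ico_neg_one_pow_mul_choose_mul_pow {R : Type*} [CommRing R] (a w : ℕ) (x : R) :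
    ∑ m ∈ Ico a (w + 1), (-1) ^ (w + m) * (w.choose m : R) * x ^ (m - a) =
      ∑ j ∈ range (w + 1 - a), (-1) ^ j * (w.choose j : R) * x ^ (w - a - j) := by
  refine sum_nbij' (w - ·) (w - ·) ?_ ?_ ?_ ?_ ?_
  · intro m hm
    simp only [mem_Ico, mem_range] at hm ⊢
    omega
  · intro j hj
    simp only [mem_Ico, mem_range] at hj ⊢
    omega
  · intro m hm
    rw [mem_Ico] at hm
    exact Nat.sub_sub_self (by omega)
  · intro j hj
    rw [mem_range] at hj
    exact Nat.sub_sub_self (by omega)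
  · intro m hm
    obtain ⟨ham, hmw⟩ := mem_Ico.1 hm
    have hsign : (-1 : R) ^ (w + m) = (-1) ^ (w - m) := by
      rw [show w + m = w - m + 2 * m by omega, pow_add, pow_mul, neg_one_sq, one_pow, mul_one]
    rw [hsign, Nat.choose_symm (by omega), show w - a - (w - m) = m - a by omega]

theorem sum_range_neg_one_pow_mul_choose_mul_ite {d w : ℕ} (hd : 4 ≤ d) (hw : 2 < w)
    (hdw : d ≤ w + 2) (A B K x : ℤ) :
    ∑ m ∈ range (w + 1), (-1 : ℤ) ^ (w + m) * w.choose m *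
        (if d ≤ m + 1 then A * x ^ (m + 1 - d)
          else m.choose 2 * B + if m + 2 = d then K else 0) =
      A * ∑ j ∈ range (w + 2 - d), (-1 : ℤ) ^ j * w.choose j * x ^ (w + 1 - d - j) +
        (-1) ^ (w + d) * (w.choose 2 * (w - 3).choose (d - 4) * B + w.choose (d - 2) * K) := by
  obtain ⟨r, rfl⟩ := Nat.exists_eq_add_of_le' (show 2 ≤ d by omega)
  have hhigh : ∑ m ∈ Ico (r + 1) (w + 1), (-1 : ℤ) ^ (w + m) * w.choose m *
      (if r + 2 ≤ m + 1 then A * x ^ (m + 1 - (r + 2))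
        else m.choose 2 * B + if m + 2 = r + 2 then K else 0) =
      A * ∑ j ∈ range (w - r), (-1 : ℤ) ^ j * w.choose j * x ^ (w - (r + 1) - j) := by
    rw [← Nat.add_sub_add_right w 1 r, ← sum_Ico_neg_one_pow_mul_choose_mul_pow, mul_sum]
    refine sum_congr rfl fun m hm => ?_
    rw [if_pos (by simpa using (mem_Ico.1 hm).1), show m + 1 - (r + 2) = m - (r + 1) by omega]
    ring
  have hlow : ∑ m ∈ range (r + 1), (-1 : ℤ) ^ (w + m) * w.choose m *
      (if r + 2 ≤ m + 1 then A * x ^ (m + 1 - (r + 2))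
        else m.choose 2 * B + if m + 2 = r + 2 then K else 0) =
      (-1) ^ w * B * ∑ m ∈ range (r + 1), (-1 : ℤ) ^ m * w.choose m * m.choose 2 +
        (-1) ^ (w + r) * w.choose r * K := by
    have hK : (-1 : ℤ) ^ (w + r) * w.choose r * K = ∑ m ∈ range (r + 1),
        (-1 : ℤ) ^ (w + m) * w.choose m * if m = r then K else 0 := by
      simp
    rw [hK, mul_sum, ← sum_add_distrib]
    refine sum_congr rfl fun m hm => ?_
    rw [if_neg (by have := mem_range.1 hm; omega), pow_add]
    simp only [Nat.add_right_cancel_iff]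
    ring
  rw [← sum_range_add_sum_Ico _ (show r + 1 ≤ w + 1 by omega), hlow, hhigh,
    sum_range_neg_one_pow_mul_choose_mul_choose (by omega) hw, ← add_assoc w r 2,
    Nat.add_sub_add_right, Nat.sub_sub, Nat.add_sub_add_right w 1 (r + 1),
    show r + 2 - 4 = r - 2 by omega, Nat.add_sub_cancel, pow_add (-1 : ℤ) (w + r) 2]
  ring

end AlternatingSums

section HammingSupport

variable {ι β : Type*} [Fintype ι] [DecidableEq β]

/-- The support of a word, as a finset, so that its cardinality is the Hamming weight. -/
def hammingSupport [Zero β] (x : ι → β) : Finset ι := {i | x i ≠ 0}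

@[simp]
theorem mem_hammingSupport [Zero β] {x : ι → β} {i : ι} : i ∈ hammingSupport x ↔ x i ≠ 0 := by
  simp [hammingSupport]

theorem card_hammingSupport [Zero β] (x : ι → β) : #(hammingSupport x) = hammingNorm x := rfl

theorem hammingSupport_subset_iff [Zero β] {x : ι → β} {S : Finset ι} :
    hammingSupport x ⊆ S ↔ ∀ i ∉ S, x i = 0 := by
  simp only [subset_iff, mem_hammingSupport, ne_eq, not_imp_comm]

theorem card_filter_hammingSupport_eq [Zero β] [Fintype β] [DecidableEq ι] (T : Finset ι) :
    #{e : ι → β | hammingSupport e = T} = (Fintype.card β - 1) ^ #T := by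
  have hpi : ({e : ι → β | hammingSupport e = T} : Finset _) =
      Fintype.piFinset fun i => if i ∈ T then univ.erase 0 else {0} := by
    ext e
    simp only [mem_filter_univ, Finset.ext_iff, mem_hammingSupport, Fintype.mem_piFinset]
    refine forall_congr' fun i => ?_
    by_cases hi : i ∈ T <;> simp [hi]
  simp only [hpi, Fintype.card_piFinset, apply_ite card, card_singleton, card_univ,
    card_erase_of_mem (mem_univ _), Fintype.prod_ite_mem, prod_const]

theorem card_filter_hammingNorm_eq_hammingSupport_subset [Zero β] [Fintype β] [DecidableEq ι]
    (W : ℕ) (S : Finset ι) :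
    #{e : ι → β | hammingNorm e = W ∧ hammingSupport e ⊆ S} =
      (#S).choose W * (Fintype.card β - 1) ^ W := by
  have hmaps : ∀ e ∈ ({e : ι → β | hammingNorm e = W ∧ hammingSupport e ⊆ S} : Finset _),
      hammingSupport e ∈ powersetCard W S := by
    simp +contextual [mem_powersetCard, card_hammingSupport]
  rw [card_eq_sum_card_fiberwise hmaps, ← card_powersetCard]
  refine sum_const_nat fun T hT => ?_
  obtain ⟨hTS, rfl⟩ := mem_powersetCard.1 hT
  rw [← card_filter_hammingSupport_eq, filter_filter]
  congr 1
  refine filter_congr fun e _ => and_iff_right_of_imp ?_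
  rintro rfl
  exact ⟨rfl, hTS⟩

variable [AddGroup β] [DecidableEq ι]

theorem hammingSupport_subset_union_of_add_subset {e c : ι → β} {S : Finset ι}
    (h : hammingSupport (e + c) ⊆ S) : hammingSupport c ⊆ S ∪ hammingSupport e := by
  rw [hammingSupport_subset_iff] at h ⊢
  intro i hi
  simp only [mem_union, mem_hammingSupport, not_or, not_not] at hi
  simpa [hi.2] using h i hi.1

theorem hammingSupport_eq_union_of_add_subset {e c : ι → β} {S : Finset ι}
    (hcard : #S + hammingNorm e ≤ hammingNorm c) (h : hammingSupport (e + c) ⊆ S) :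
    Disjoint S (hammingSupport e) ∧ hammingSupport c = S ∪ hammingSupport e := by
  have hsub := hammingSupport_subset_union_of_add_subset h
  have hle := card_le_card hsub
  have hunion := card_union_le S (hammingSupport e)
  simp only [← card_hammingSupport] at hcard
  exact ⟨card_union_eq_card_add_card.1 (by omega), eq_of_subset_of_card_le hsub (by omega)⟩

theorem hammingSupport_add_subset_iff_of_disjoint {e c : ι → β} {S T : Finset ι}
    (hST : Disjoint S T) (hc : hammingSupport c = S ∪ T) :
    hammingSupport e = T ∧ hammingSupport (e + c) ⊆ S ↔ e = T.piecewise (-c) 0 := by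
  have hcT : ∀ i ∈ T, c i ≠ 0 := fun i hi =>
    mem_hammingSupport.1 (hc ▸ mem_union_right S hi)
  have hcST : ∀ i ∉ S, i ∉ T → c i = 0 := fun i hS hT =>
    hammingSupport_subset_iff.1 hc.subset i (by simp [hS, hT])
  constructor
  · rintro ⟨rfl, h⟩
    ext i
    by_cases hi : i ∈ hammingSupport e
    · rw [piecewise_eq_of_mem _ _ _ hi]
      exact eq_neg_of_add_eq_zero_left
        (hammingSupport_subset_iff.1 h i (disjoint_right.1 hST hi))
    · rw [piecewise_eq_of_notMem _ _ _ hi]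
      simpa using hi
  · rintro rfl
    refine ⟨?_, hammingSupport_subset_iff.2 fun i hS => ?_⟩
    · ext i
      by_cases hi : i ∈ T <;> simp [hi, hcT]
    · by_cases hi : i ∈ T
      · simp [hi]
      · simp [hi, hcST i hS hi]

end HammingSupport

theorem natCard_preimage_singleton_of_surjective {K V V' : Type*} [DivisionRing K] [Finite K]
    [AddCommGroup V] [Module K V] [Module.Finite K V] [AddCommGroup V'] [Module K V']
    {f : V →ₗ[K] V'} (hf : Function.Surjective f) (v' : V') :
    Nat.card (f ⁻¹' {v'}) = Nat.card K ^ (Module.finrank K V - Module.finrank K V') := by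
  have hker : Module.finrank K V - Module.finrank K V' = Module.finrank K f.ker := by
    rw [← LinearMap.finrank_range_add_finrank_ker f, LinearMap.range_eq_top.2 hf, finrank_top,
      Nat.add_sub_cancel_left]
  rw [hker, ← Module.natCard_eq_pow_finrank]
  exact Nat.card_congr (f.toAddMonoidHom.fiberEquivKerOfSurjective hf v')

section MDS

variable {F ι : Type*} [Field F] [Fintype ι] [DecidableEq F]

/-- `C` is an MDS code of length `#ι` whose nonzero words have weight at least `d`, i.e. it
attains the Singleton bound `d + dim C ≤ n + 1`.  No word of weight `d` is required, so the zero
code is included, with `d = n + 1`. -/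
structure IsMDSCode (C : Submodule F (ι → F)) (d : ℕ) : Prop where
  le_hammingNorm : ∀ c ∈ C, c ≠ 0 → d ≤ hammingNorm c
  add_finrank : d + Module.finrank F C = Fintype.card ι + 1

/-- The restriction of the codewords of `C` to the coordinates in `T`. -/
def restrictCoords (C : Submodule F (ι → F)) (T : Finset ι) : C →ₗ[F] (T → F) :=
  LinearMap.funLeft F F ((↑) : T → ι) ∘ₗ C.subtype

variable {C : Submodule F (ι → F)} {d : ℕ}

theorem eq_of_sub_mem_of_hammingNorm_add_lt
    (hmin : ∀ c ∈ C, c ≠ 0 → d ≤ hammingNorm c) {e e' : ι → F} (hmem : e' - e ∈ C)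
    (hlt : hammingNorm e + hammingNorm e' < d) : e = e' := by
  by_contra hne
  have hwt := hmin _ hmem (sub_ne_zero.2 (Ne.symm hne))
  have htri := hammingDist_triangle e 0 e'
  rw [hammingDist_zero_right, hammingDist_zero_left, hammingDist_eq_hammingNorm,
    neg_add_eq_sub] at htri
  omega

theorem restrictCoords_injective [DecidableEq ι] (hmin : ∀ c ∈ C, c ≠ 0 → d ≤ hammingNorm c)
    {S : Finset ι} (hS : #S < d) :
    Function.Injective (restrictCoords C Sᶜ) := by
  rw [← LinearMap.ker_eq_bot, LinearMap.ker_eq_bot']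
  intro c hc
  by_contra hne
  have hsupp : hammingSupport (c : ι → F) ⊆ S :=
    hammingSupport_subset_iff.2 fun i hi => congrFun hc ⟨i, mem_compl.2 hi⟩
  have hwt := hmin c c.2 (by simpa using hne)
  exact (hwt.trans (card_le_card hsupp)).not_gt hS

namespace IsMDSCode

theorem one_le (hC : IsMDSCode C d) : 1 ≤ d := by
  have hadd := hC.add_finrank
  have hle : Module.finrank F C ≤ Fintype.card ι := by simpa using Submodule.finrank_le C
  omega

variable [DecidableEq ι]

theorem restrictCoords_surjective (hC : IsMDSCode C d) {S : Finset ι} (hS : d ≤ #S + 1) :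
    Function.Surjective (restrictCoords C Sᶜ) := by
  have hd := hC.one_le
  obtain ⟨S₀, hS₀, hcard⟩ := exists_subset_card_eq (show d - 1 ≤ #S by omega)
  have hdim : Module.finrank F C = Module.finrank F (↥S₀ᶜ → F) := by
    have hadd := hC.add_finrank
    rw [Module.finrank_fintype_fun_eq_card, Fintype.card_coe, card_compl]
    omega
  have hsurj₀ : Function.Surjective (restrictCoords C S₀ᶜ) :=
    (LinearMap.injective_iff_surjective_of_finrank_eq_finrank hdim).1
      (restrictCoords_injective hC.le_hammingNorm (by omega))
  exact (LinearMap.funLeft_surjective_of_injective F F _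
    (Set.inclusion_injective (compl_subset_compl.2 hS₀))).comp hsurj₀

variable [Fintype F] [DecidablePred (· ∈ C)]

theorem card_filter_eqOn_compl (hC : IsMDSCode C d) {S : Finset ι} (hS : d ≤ #S + 1) (y : ι → F) :
    #{c | c ∈ C ∧ ∀ i ∉ S, c i = y i} = Fintype.card F ^ (#S + 1 - d) := by
  have hfiber : #{c | c ∈ C ∧ ∀ i ∉ S, c i = y i} =
      Nat.card (restrictCoords C Sᶜ ⁻¹' {fun i : ↥Sᶜ => y i}) := by
    rw [← Fintype.card_subtype, ← Nat.card_eq_fintype_card]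
    refine Nat.card_congr ((Equiv.subtypeSubtypeEquivSubtypeInter _ _).symm.trans
      (Equiv.subtypeEquivRight fun c => ?_))
    simp [restrictCoords, funext_iff]
  have hadd := hC.add_finrank
  have hSι := card_le_univ S
  rw [hfiber, natCard_preimage_singleton_of_surjective (hC.restrictCoords_surjective hS),
    Nat.card_eq_fintype_card, Module.finrank_fintype_fun_eq_card, Fintype.card_coe, card_compl]
  congr 1
  omega

theorem card_filter_hammingSupport_eq (hC : IsMDSCode C d) {U : Finset ι} (hU : #U = d) :
    #{c | c ∈ C ∧ hammingSupport c = U} = Fintype.card F - 1 := by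
  have herase : ({c | c ∈ C ∧ hammingSupport c = U} : Finset (ι → F)) =
      ({c | c ∈ C ∧ ∀ i ∉ U, c i = (0 : ι → F) i} : Finset (ι → F)).erase 0 := by
    ext c
    simp only [mem_filter_univ, mem_erase, Pi.zero_apply, ← hammingSupport_subset_iff]
    constructor
    · rintro ⟨hc, rfl⟩
      refine ⟨?_, hc, Subset.rfl⟩
      rintro rfl
      rw [card_hammingSupport, hammingNorm_zero] at hU
      exact absurd hC.one_le (by omega)
    · rintro ⟨hne, hc, hsub⟩
      exact ⟨hc, eq_of_subset_of_card_le hsub (hU ▸ hC.le_hammingNorm c hc hne)⟩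
  rw [herase, card_erase_of_mem (by simp), hC.card_filter_eqOn_compl (by omega), hU,
    Nat.add_sub_cancel_left, pow_one]

end IsMDSCode

end MDS

section ErrorCodewordPairs

variable {F ι : Type*} [Field F] [Fintype F] [Fintype ι] [DecidableEq F] [DecidableEq ι]

/-- The pairs `(e, c)` of an error vector `e` of weight `W` and a codeword `c`; such a pair stands
for the word `e + c` together with a vector `e` of weight `W` in its coset. -/
def errorCodewordPairs (C : Submodule F (ι → F)) [DecidablePred (· ∈ C)] (W : ℕ) :
    Finset ((ι → F) × (ι → F)) :=
  univ.filter (hammingNorm · = W) ×ˢ univ.filter (· ∈ C)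

variable {C : Submodule F (ι → F)} [DecidablePred (· ∈ C)] {d W : ℕ} {S : Finset ι}

theorem mem_errorCodewordPairs {p : (ι → F) × (ι → F)} :
    p ∈ errorCodewordPairs C W ↔ hammingNorm p.1 = W ∧ p.2 ∈ C := by
  simp [errorCodewordPairs]

/-- The number of pairs in `errorCodewordPairs C W` whose sum is supported in `S`. -/
def numPairsSupportedIn (C : Submodule F (ι → F)) [DecidablePred (· ∈ C)] (W : ℕ)
    (S : Finset ι) : ℕ :=
  #{p ∈ errorCodewordPairs C W | hammingSupport (p.1 + p.2) ⊆ S}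

theorem numPairsSupportedIn_eq_add : numPairsSupportedIn C W S =
    (#S).choose W * (Fintype.card F - 1) ^ W +
      #{p ∈ errorCodewordPairs C W | p.2 ≠ 0 ∧ hammingSupport (p.1 + p.2) ⊆ S} := by
  have hzero : #{p ∈ errorCodewordPairs C W | p.2 = 0 ∧ hammingSupport (p.1 + p.2) ⊆ S} =
      #{e : ι → F | hammingNorm e = W ∧ hammingSupport e ⊆ S} := by
    refine card_nbij' Prod.fst (fun e => (e, 0)) ?_ ?_ ?_ ?_
    · rintro ⟨e, c⟩
      simp +contextual [mem_errorCodewordPairs]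
    · intro e
      simp +contextual [mem_errorCodewordPairs]
    · rintro ⟨e, c⟩
      simp +contextual
    · exact fun _ _ => rfl
  rw [numPairsSupportedIn, ← card_filter_hammingNorm_eq_hammingSupport_subset, ← hzero,
    ← card_filter_add_card_filter_not fun p : (ι → F) × (ι → F) => p.2 = 0, filter_filter,
    filter_filter]
  simp only [and_comm, ne_eq]

theorem numPairsSupportedIn_of_add_lt (hmin : ∀ c ∈ C, c ≠ 0 → d ≤ hammingNorm c)
    (hS : #S + W < d) :
    numPairsSupportedIn C W S = (#S).choose W * (Fintype.card F - 1) ^ W := by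
  rw [numPairsSupportedIn_eq_add, Nat.add_eq_left, card_eq_zero, filter_eq_empty_iff]
  rintro ⟨e, c⟩ hec ⟨hne, hsub⟩
  obtain ⟨he, hc⟩ := mem_errorCodewordPairs.1 hec
  have hle := card_le_card (hammingSupport_subset_union_of_add_subset hsub)
  have hunion := card_union_le S (hammingSupport e)
  have hwt := hmin c hc hne
  simp only [card_hammingSupport] at hle hunion he
  omega

theorem IsMDSCode.numPairsSupportedIn_of_le_add_one (hC : IsMDSCode C d) (hS : d ≤ #S + 1) :
    numPairsSupportedIn C W S =
      (Fintype.card ι).choose W * (Fintype.card F - 1) ^ W * Fintype.card F ^ (#S + 1 - d) := by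
  have hfiber : ∀ e : ι → F, #{c ∈ ({c | c ∈ C} : Finset (ι → F)) | hammingSupport (e + c) ⊆ S} =
      Fintype.card F ^ (#S + 1 - d) := by
    intro e
    rw [← hC.card_filter_eqOn_compl hS (-e), filter_filter]
    simp only [hammingSupport_subset_iff, Pi.add_apply, Pi.neg_apply, eq_neg_iff_add_eq_zero,
      add_comm]
  have herrors := card_filter_hammingNorm_eq_hammingSupport_subset (β := F) W (univ : Finset ι)
  simp only [subset_univ, and_true, card_univ] at herrors
  rw [numPairsSupportedIn, errorCodewordPairs, card_filter, sum_product]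
  simp only [← card_filter, hfiber, sum_const, herrors, smul_eq_mul]

theorem IsMDSCode.card_pairs_hammingSupport_fst_eq (hC : IsMDSCode C d) {T : Finset ι}
    (hST : Disjoint S T) (hd : #S + #T = d) :
    #{p ∈ errorCodewordPairs C #T |
        (p.2 ≠ 0 ∧ hammingSupport (p.1 + p.2) ⊆ S) ∧ hammingSupport p.1 = T} =
      Fintype.card F - 1 := by
  have himage : {p ∈ errorCodewordPairs C #T |
      (p.2 ≠ 0 ∧ hammingSupport (p.1 + p.2) ⊆ S) ∧ hammingSupport p.1 = T} =
      (univ.filter fun c : ι → F => c ∈ C ∧ hammingSupport c = S ∪ T).image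
        fun c => ((T.piecewise (-c) 0 : ι → F), c) := by
    ext ⟨e, c⟩
    simp only [mem_filter, mem_errorCodewordPairs, mem_image, mem_univ, true_and,
      Prod.mk.injEq]
    constructor
    · rintro ⟨⟨-, hc⟩, ⟨hne, hsub⟩, rfl⟩
      have hwt := hC.le_hammingNorm c hc hne
      have hsupp := (hammingSupport_eq_union_of_add_subset (hd.trans_le hwt) hsub).2
      exact ⟨c, ⟨hc, hsupp⟩,
        ((hammingSupport_add_subset_iff_of_disjoint hST hsupp).1 ⟨rfl, hsub⟩).symm, rfl⟩
    · rintro ⟨c, ⟨hc, hsupp⟩, rfl, rfl⟩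
      obtain ⟨he, hsub⟩ := (hammingSupport_add_subset_iff_of_disjoint hST hsupp).2 rfl
      refine ⟨⟨by rw [← card_hammingSupport, he], hc⟩, ⟨?_, hsub⟩, he⟩
      have hwt : hammingNorm c = d := by
        rw [← card_hammingSupport, hsupp, card_union_of_disjoint hST, hd]
      have := hC.one_le
      exact hammingNorm_ne_zero_iff.1 (by omega)
  rw [himage, card_image_of_injective _ fun c c' h => (Prod.mk.inj h).2,
    hC.card_filter_hammingSupport_eq (by rw [card_union_of_disjoint hST, hd])]

-- The nonzero codewords that occur have minimum weight and support `S ∪ supp e`, disjointly.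
theorem IsMDSCode.numPairsSupportedIn_of_add_eq (hC : IsMDSCode C d) (hS : #S + W = d) :
    numPairsSupportedIn C W S = (#S).choose W * (Fintype.card F - 1) ^ W +
      (Fintype.card ι - #S).choose W * (Fintype.card F - 1) := by
  have hmaps : ∀ p ∈ {p ∈ errorCodewordPairs C W |
      p.2 ≠ 0 ∧ hammingSupport (p.1 + p.2) ⊆ S}, hammingSupport p.1 ∈ powersetCard W Sᶜ := by
    rintro ⟨e, c⟩ hec
    obtain ⟨hec, hne, hsub⟩ := mem_filter.1 hec
    obtain ⟨rfl, hc⟩ := mem_errorCodewordPairs.1 hec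
    have hwt := hC.le_hammingNorm c hc hne
    have hdisj := (hammingSupport_eq_union_of_add_subset (hS.trans_le hwt) hsub).1
    exact mem_powersetCard.2 ⟨subset_compl_iff_disjoint_left.2 hdisj, rfl⟩
  rw [numPairsSupportedIn_eq_add, card_eq_sum_card_fiberwise hmaps, ← card_compl,
    ← card_powersetCard W Sᶜ]
  congr 1
  refine sum_const_nat fun T hT => ?_
  obtain ⟨hTS, rfl⟩ := mem_powersetCard.1 hT
  rw [filter_filter]
  exact hC.card_pairs_hammingSupport_fst_eq (subset_compl_iff_disjoint_left.1 hTS) hS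

theorem IsMDSCode.numPairsSupportedIn_two (hC : IsMDSCode C d) (m : ℕ) (S : Finset ι)
    (hS : #S = m) :
    (numPairsSupportedIn C 2 S : ℤ) =
      if d ≤ m + 1 then
        (Fintype.card ι).choose 2 * ((Fintype.card F : ℤ) - 1) ^ 2 * Fintype.card F ^ (m + 1 - d)
      else (m).choose 2 * ((Fintype.card F : ℤ) - 1) ^ 2 +
        if m + 2 = d then (Fintype.card ι + 2 - d).choose 2 * ((Fintype.card F : ℤ) - 1)
        else 0 := by
  subst hS
  have hq : 1 ≤ Fintype.card F := Fintype.card_pos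
  split_ifs with hlarge hmid
  · rw [hC.numPairsSupportedIn_of_le_add_one hlarge]
    push_cast [hq]
    rfl
  · rw [hC.numPairsSupportedIn_of_add_eq hmid, ← hmid, Nat.add_sub_add_right]
    push_cast [hq]
    rfl
  · rw [numPairsSupportedIn_of_add_lt hC.le_hammingNorm (by omega)]
    push_cast [hq]
    ring

end ErrorCodewordPairs

section CosetWeight

variable {F : Type*} [Field F] [Fintype F] [DecidableEq F] {n : ℕ}
  {C : Submodule F (Fin n → F)} {d W : ℕ}

theorem cosetWeight_eq_iff_exists (hmin : ∀ c ∈ C, c ≠ 0 → d ≤ hammingNorm c) (hW : 2 * W < d)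
    (x : Fin n → F) : cosetWeight C x = W ↔ ∃ e, hammingNorm e = W ∧ x - e ∈ C := by
  obtain ⟨c, hc, hcw⟩ : ∃ c ∈ C, hammingNorm (x - c) = cosetWeight C x :=
    Nat.sInf_mem (s := {m | ∃ c ∈ C, hammingNorm (x - c) = m}) ⟨_, 0, C.zero_mem, rfl⟩
  constructor
  · rintro rfl
    exact ⟨x - c, hcw, by rwa [sub_sub_cancel]⟩
  · rintro ⟨e, rfl, he⟩
    have hle : cosetWeight C x ≤ hammingNorm e := Nat.sInf_le ⟨x - e, he, by rw [sub_sub_cancel]⟩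
    have hmem : x - c - e ∈ C := by
      rw [sub_right_comm]
      exact C.sub_mem he hc
    rw [eq_of_sub_mem_of_hammingNorm_add_lt hmin hmem (by omega), hcw]

-- Pairs of the same sum have equal errors, so the words counted biject with the pairs.
theorem numVectorsCosetExact_eq_card_pairs [DecidablePred (· ∈ C)]
    (hmin : ∀ c ∈ C, c ≠ 0 → d ≤ hammingNorm c) (hW : 2 * W < d) (w : ℕ) :
    numVectorsCosetExact C w W =
      #{p ∈ errorCodewordPairs C W | #(hammingSupport (p.1 + p.2)) = w} := by
  have hinj : Set.InjOn (fun p : (Fin n → F) × (Fin n → F) => p.1 + p.2)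
      ↑({p ∈ errorCodewordPairs C W | #(hammingSupport (p.1 + p.2)) = w} : Finset _) := by
    rintro ⟨e, c⟩ hp ⟨e', c'⟩ hp' (hsum : e + c = e' + c')
    simp only [coe_filter, Set.mem_ofPred_eq, mem_errorCodewordPairs] at hp hp'
    obtain ⟨⟨he, hc⟩, -⟩ := hp
    obtain ⟨⟨he', hc'⟩, -⟩ := hp'
    have hmem : e' - e ∈ C := by
      rw [sub_eq_sub_iff_add_eq_add.2 (by rw [← hsum, add_comm])]
      exact C.sub_mem hc hc'
    obtain rfl := eq_of_sub_mem_of_hammingNorm_add_lt hmin hmem (by omega)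
    rw [add_left_cancel hsum]
  rw [numVectorsCosetExact, ← card_image_of_injOn hinj, ← Set.ncard_coe_finset]
  congr 1
  ext x
  simp only [Set.mem_ofPred_eq, cosetWeight_eq_iff_exists hmin hW, coe_image, coe_filter,
    mem_errorCodewordPairs, Set.mem_image, Prod.exists]
  constructor
  · rintro ⟨hx, e, he, hxe⟩
    exact ⟨e, x - e, ⟨⟨he, hxe⟩, by rwa [add_sub_cancel]⟩, add_sub_cancel e x⟩
  · rintro ⟨e, c, ⟨⟨he, hc⟩, hw⟩, rfl⟩
    exact ⟨hw, e, he, by rwa [add_sub_cancel_left]⟩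

end CosetWeight

/-- **Integral weight spectrum of the weight-2 cosets of an MDS code** (Theorem 5.3(i),
eq. (5.5)).  For an `[n,k,d]_q` MDS code with `d ≥ 5` and `d-2 ≤ w ≤ n`,
`A_w^Σ(V^{(2)}) = C(n,w)(q-1)²[ C(n,2) ∑_{j=0}^{w+1-d} (-1)^j C(w,j) q^{w+1-d-j}
  + (-1)^{w-d} C(w,2) C(w-3,d-4) ]
  + (-1)^{w-d} C(n,w) C(w,d-2) C(n-d+2,2) (q-1)`. -/
theorem numVectorsCosetExact_two_eq {F : Type*} [Field F] [Fintype F] [DecidableEq F]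
    (q n k d w : ℕ) (hq : Fintype.card F = q)
    (C : Submodule F (Fin n → F))
    (hk : Module.finrank F C = k) (hmin : HasMinDist C d) (hMDS : d + k = n + 1)
    (hd : 5 ≤ d) (hw1 : d - 2 ≤ w) (hwn : w ≤ n) :
    (numVectorsCosetExact C w 2 : ℤ) =
      (n.choose w : ℤ) * ((q : ℤ) - 1) ^ 2 *
        ((n.choose 2 : ℤ) * ∑ j ∈ Finset.range (w + 2 - d),
            (-1 : ℤ) ^ j * (w.choose j : ℤ) * (q : ℤ) ^ (w + 1 - d - j)
          + (-1 : ℤ) ^ (w + d) * (w.choose 2 : ℤ) * ((w - 3).choose (d - 4) : ℤ))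
      + (-1 : ℤ) ^ (w + d) * (n.choose w : ℤ) * (w.choose (d - 2) : ℤ) *
          ((n - d + 2).choose 2 : ℤ) * ((q : ℤ) - 1) := by
  classical
  have hC : IsMDSCode C d := ⟨hmin.1, by rw [hk, hMDS, Fintype.card_fin]⟩
  have hdn : d ≤ n := by
    obtain ⟨c, -, -, rfl⟩ := hmin.2
    simpa using hammingNorm_le_card_fintype (x := c)
  rw [numVectorsCosetExact_eq_card_pairs hC.le_hammingNorm (by omega),
    card_filter_card_eq_of_card_filter_subset _ _ hC.numPairsSupportedIn_two,
    sum_range_neg_one_pow_mul_choose_mul_ite (by omega) (by omega) (by omega), hq,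
    Fintype.card_fin, Nat.sub_add_comm hdn]
  ring
end

section
/- Let C be a [q+1, q-3, 5]_q MDS code of length n = q+1 and minimum distance d = 5, and let w be a natural number with 3 ≤ w ≤ q+1. Then the overall number A_w^Σ(V^{(2)}) of Hamming-weight-w vectors lying in cosets of C of weight exactly 2 satisfies, as an identity of rational numbers, A_w^Σ(V^{(2)}) = C(q+1, 2) (q-1)^2 · [ A_w(C) - ε · ( C(q+1, w) C(w-1, 3) - C(q-1, w-2) C(w-3, 1) ) + ε · (1/3) · C(q-2, w-3) C(q-2, 2) ], where ε = (-1)^{w-5}. -/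
/-!
Write `q` for the size of the field. As `5 ≤ d`, a vector `x` whose coset has weight `2` has exactly
one `e` of weight `2` with `x - e ∈ C`, so the vectors to be counted correspond to such pairs
`(x, e)` with `x` of weight `w`. By inclusion–exclusion over the coordinates, the number of these
pairs is determined by the numbers of pairs with `x` supported in a given set `S`, and for an MDS
code the latter depend only on `t = #S`.

* If `d ≤ t + 1`, every `e` of weight `2` agrees off `S` with exactly `q ^ (t + 1 - d)` codewords,
  so the pairs are `C(n, 2) (q - 1) ^ 2` times as many as the codewords supported in `S`.
* If `t + 2 ≤ d`, the pairs with `x = e` contribute `C(t, 2) (q - 1) ^ 2`; any other pair comes from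
  a codeword with exactly two nonzero coordinates off `S`, so that `t + 2 = d` and the codeword is
  one of the `q - 1` nonzero ones whose support is `S` together with two further coordinates.

Subtracting `C(n, 2) (q - 1) ^ 2` times the count of the codewords of weight `w` hence leaves only
the terms with `t ≤ d - 2`, and these are truncated alternating sums of binomial coefficients.
-/

open Finset

section Support

variable {ι F : Type*} [Fintype ι] [Zero F] [DecidableEq F]

/-- The support of a vector as a finset of coordinates, so that `#(suppFinset x)` is
`hammingNorm x` by definition. -/
def suppFinset (x : ι → F) : Finset ι :=
  {i | x i ≠ 0}

lemma mem_suppFinset {x : ι → F} {i : ι} : i ∈ suppFinset x ↔ x i ≠ 0 := by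
  simp [suppFinset]

lemma notMem_suppFinset {x : ι → F} {i : ι} : i ∉ suppFinset x ↔ x i = 0 := by
  simp [suppFinset]

lemma card_suppFinset (x : ι → F) : #(suppFinset x) = hammingNorm x := rfl

lemma suppFinset_subset_iff {x : ι → F} {S : Finset ι} :
    suppFinset x ⊆ S ↔ ∀ i ∉ S, x i = 0 := by
  simp only [subset_iff, mem_suppFinset, ne_eq, not_imp_comm]

variable [DecidableEq ι] [Fintype F]

lemma sum_filter_suppFinset_subset_and_hammingNorm_eq {M : Type*} [AddCommMonoid M]
    (g : (ι → F) → M) (S : Finset ι) (w : ℕ) :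
    ∑ x with suppFinset x ⊆ S ∧ hammingNorm x = w, g x =
      ∑ T ∈ S.powersetCard w, ∑ x with suppFinset x = T, g x := by
  rw [← sum_fiberwise_of_maps_to (g := suppFinset) (t := S.powersetCard w)]
  · refine sum_congr rfl fun T hT ↦ ?_
    rw [mem_powersetCard] at hT
    rw [filter_filter]
    congr 1 with x
    simp only [mem_filter, mem_univ, true_and, and_iff_right_iff_imp]
    rintro rfl
    exact hT
  · simp [mem_powersetCard, card_suppFinset]

lemma card_filter_suppFinset_eq (T : Finset ι) :
    #{x : ι → F | suppFinset x = T} = (Fintype.card F - 1) ^ #T := by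
  have h : ({x : ι → F | suppFinset x = T} : Finset _) =
      Fintype.piFinset fun i ↦ if i ∈ T then univ.erase 0 else {0} := by
    ext x
    simp only [mem_filter, mem_univ, true_and, Fintype.mem_piFinset, Finset.ext_iff,
      mem_suppFinset]
    refine forall_congr' fun i ↦ ?_
    by_cases hi : i ∈ T <;> simp [hi]
  rw [h, Fintype.card_piFinset]
  simp [apply_ite, card_erase_of_mem]

lemma card_filter_suppFinset_subset_and_hammingNorm_eq (S : Finset ι) (w : ℕ) :
    #{x : ι → F | suppFinset x ⊆ S ∧ hammingNorm x = w} =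
      (#S).choose w * (Fintype.card F - 1) ^ w := by
  calc
    _ = ∑ T ∈ S.powersetCard w, #{x : ι → F | suppFinset x = T} := by
      simp only [card_eq_sum_ones, sum_filter_suppFinset_subset_and_hammingNorm_eq]
    _ = ∑ T ∈ S.powersetCard w, (Fintype.card F - 1) ^ w :=
      sum_congr rfl fun T hT ↦ by
        rw [card_filter_suppFinset_eq, (mem_powersetCard.mp hT).2]
    _ = (#S).choose w * (Fintype.card F - 1) ^ w := by simp

lemma card_filter_hammingNorm_eq (w : ℕ) :
    #{x : ι → F | hammingNorm x = w} =
      (Fintype.card ι).choose w * (Fintype.card F - 1) ^ w := by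
  simpa using card_filter_suppFinset_subset_and_hammingNorm_eq (F := F) (univ : Finset ι) w

lemma sum_filter_suppFinset_eq {G : Type*} [AddCommGroup G] (g : (ι → F) → G)
    (S : Finset ι) :
    ∑ x with suppFinset x = S, g x =
      ∑ T ∈ S.powerset, (-1 : ℤ) ^ #T • ∑ x with suppFinset x ⊆ S \ T, g x := by
  have h_eq : ({x | suppFinset x = S} : Finset (ι → F)) =
      {x ∈ S.inf fun i ↦ ({x | x i = 0} : Finset (ι → F))ᶜ | suppFinset x ⊆ S} := by
    ext x
    simp only [mem_filter, mem_univ, true_and, mem_inf, mem_compl, subset_antisymm_iff,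
      subset_iff, mem_suppFinset]
    tauto
  have h_sdiff (T : Finset ι) : ({x | suppFinset x ⊆ S \ T} : Finset (ι → F)) =
      {x ∈ T.inf fun i ↦ ({x | x i = 0} : Finset (ι → F)) | suppFinset x ⊆ S} := by
    ext x
    simp only [mem_filter, mem_univ, true_and, mem_inf, subset_iff, mem_suppFinset, mem_sdiff]
    grind
  simp only [h_eq, h_sdiff, sum_filter]
  exact inclusion_exclusion_sum_inf_compl S _ _

lemma sum_filter_hammingNorm_eq_of_sum_suppFinset_subset {R : Type*} [CommRing R]
    {g : (ι → F) → R} {m : ℕ → R}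
    (hm : ∀ S : Finset ι, ∑ x with suppFinset x ⊆ S, g x = m #S) (w : ℕ) :
    ∑ x with hammingNorm x = w, g x =
      (Fintype.card ι).choose w * ∑ t ∈ range (w + 1), (-1) ^ (w + t) * w.choose t * m t := by
  have h_supp (S : Finset ι) (hS : #S = w) : ∑ x with suppFinset x = S, g x =
      ∑ t ∈ range (w + 1), (-1) ^ (w + t) * w.choose t * m t := by
    calc
      _ = ∑ T ∈ S.powerset, (-1) ^ #T * m (w - #T) := by
        rw [sum_filter_suppFinset_eq]
        refine sum_congr rfl fun T hT ↦ ?_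
        rw [hm, card_sdiff_of_subset (mem_powerset.mp hT), hS]
        simp
      _ = ∑ j ∈ range (w + 1), (-1) ^ (w + (w - j)) * w.choose (w - j) * m (w - j) := by
        rw [sum_powerset_apply_card (fun j ↦ (-1) ^ j * m (w - j)), hS]
        refine sum_congr rfl fun j hj ↦ ?_
        have hj : j ≤ w := Nat.lt_succ_iff.mp (mem_range.mp hj)
        have h_sign : w + (w - j) = j + 2 * (w - j) := by lia
        rw [h_sign, pow_add, pow_mul, neg_one_sq, one_pow, Nat.choose_symm hj, nsmul_eq_mul]
        ring
      _ = _ := sum_flip fun t ↦ (-1) ^ (w + t) * w.choose t * m t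
  have h_weight := sum_filter_suppFinset_subset_and_hammingNorm_eq g univ w
  simp only [subset_univ, true_and] at h_weight
  rw [h_weight, sum_congr rfl fun S hS ↦ h_supp S (mem_powersetCard.mp hS).2]
  simp

lemma card_filter_hammingNorm_eq_and_suppFinset_add_subset {A : Type*} [AddGroup A] [Fintype A]
    [DecidableEq A] {c : ι → A} {S : Finset ι} {w : ℕ} (hw : w ≤ #(suppFinset c \ S)) :
    #{e : ι → A | hammingNorm e = w ∧ suppFinset (c + e) ⊆ S} =
      if #(suppFinset c \ S) = w then 1 else 0 := by
  have h_neg {e : ι → A} (he : suppFinset (c + e) ⊆ S) {i : ι} (hi : i ∉ S) : e i = -c i :=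
    eq_neg_of_add_eq_zero_right (suppFinset_subset_iff.mp he i hi)
  have h_sub {e : ι → A} (he : suppFinset (c + e) ⊆ S) : suppFinset c \ S ⊆ suppFinset e := by
    intro i hi
    rw [mem_sdiff, mem_suppFinset] at hi
    rw [mem_suppFinset, h_neg he hi.2]
    exact neg_ne_zero.mpr hi.1
  split_ifs with h_card
  · have h_supp : suppFinset (S.piecewise 0 (-c)) = suppFinset c \ S := by
      ext i
      by_cases hi : i ∈ S <;> simp [mem_suppFinset, hi]
    refine card_eq_one.mpr ⟨S.piecewise 0 (-c), eq_singleton_iff_unique_mem.mpr ⟨?_, ?_⟩⟩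
    · simp only [mem_filter, mem_univ, true_and, ← card_suppFinset, h_supp, h_card,
        suppFinset_subset_iff]
      intro i hi
      simp [hi]
    · intro e he
      simp only [mem_filter, mem_univ, true_and] at he
      have h_eq : suppFinset c \ S = suppFinset e :=
        eq_of_subset_of_card_le (h_sub he.2) (by rw [card_suppFinset, he.1, h_card])
      ext i
      by_cases hi : i ∈ S
      · have hie : i ∉ suppFinset e := by simp [← h_eq, hi]
        simpa [hi] using notMem_suppFinset.mp hie
      · simpa [hi] using h_neg he.2 hi
  · refine card_eq_zero.mpr (filter_eq_empty_iff.mpr fun e _ he ↦ h_card (le_antisymm ?_ hw))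
    exact (card_le_card (h_sub he.2)).trans_eq he.1

end Support

section Binomial

lemma alternating_sum_choose_mul_choose {w k s : ℕ} (hkw : k < w) (hks : k ≤ s) :
    ∑ t ∈ range (s + 1), (-1 : ℤ) ^ t * (w.choose t * t.choose k) =
      (-1) ^ s * (w.choose k * (w - k - 1).choose (s - k)) := by
  obtain ⟨m, rfl⟩ := Nat.exists_eq_add_of_lt hkw
  obtain ⟨s, rfl⟩ := Nat.exists_eq_add_of_le hks
  have h_low : ∑ t ∈ range k, (-1 : ℤ) ^ t * ((k + m + 1).choose t * t.choose k) = 0 :=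
    sum_eq_zero fun t ht ↦ by simp [Nat.choose_eq_zero_of_lt (mem_range.mp ht)]
  have h_shift (j : ℕ) : (-1 : ℤ) ^ (k + j) * ((k + m + 1).choose (k + j) * (k + j).choose k) =
      (-1) ^ k * (k + m + 1).choose k * ((-1) ^ j * (m + 1).choose j) := by
    have h := Nat.choose_mul (n := k + m + 1) (Nat.le_add_right k j)
    rw [add_assoc k m 1, Nat.add_sub_cancel_left, Nat.add_sub_cancel_left, ← add_assoc] at h
    rw [← Nat.cast_mul, h]
    push_cast
    ring
  rw [add_assoc, sum_range_add, h_low, zero_add]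
  simp only [h_shift, ← mul_sum, Int.alternating_sum_range_choose_eq_choose]
  rw [add_assoc k m 1, Nat.add_sub_cancel_left, Nat.add_sub_cancel_left, Nat.add_sub_cancel]
  ring

lemma alternating_sum_choose {w : ℕ} (hw : 0 < w) (s : ℕ) :
    ∑ t ∈ range (s + 1), (-1 : ℤ) ^ t * w.choose t = (-1) ^ s * (w - 1).choose s := by
  simpa using alternating_sum_choose_mul_choose hw (Nat.zero_le s)

lemma alternating_sum_choose_mul_ite {w k s : ℕ} (hkw : k < w) (hks : k ≤ s) (a b K : ℤ) :
    ∑ t ∈ range (w + 1), (-1) ^ (w + t) * w.choose t *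
        (if t ≤ s then a * (t.choose k - K) + if t = s then b else 0 else 0) =
      (-1) ^ (w + s) * (a * (w.choose k * (w - k - 1).choose (s - k) - K * (w - 1).choose s) +
        b * w.choose s) := by
  calc
    _ = ∑ t ∈ range (s + 1), (-1 : ℤ) ^ (w + t) * w.choose t *
          (a * (t.choose k - K) + if t = s then b else 0) := by
      refine sum_congr_of_eq_on_inter (fun t _ ht ↦ ?_) (fun t _ ht ↦ ?_) fun t _ ht ↦ ?_
      · rw [if_neg (by simpa using ht), mul_zero]
      · simp [Nat.choose_eq_zero_of_lt (show w < t by simpa using ht)]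
      · rw [if_pos (by simpa using ht)]
    _ = (-1) ^ w * (a * ∑ t ∈ range (s + 1), (-1 : ℤ) ^ t * (w.choose t * t.choose k) -
          a * K * ∑ t ∈ range (s + 1), (-1 : ℤ) ^ t * w.choose t +
          ∑ t ∈ range (s + 1), if t = s then (-1) ^ t * w.choose t * b else 0) := by
      simp only [mul_sum, ← sum_sub_distrib, ← sum_add_distrib]
      refine sum_congr rfl fun t _ ↦ ?_
      split_ifs <;> ring
    _ = _ := by
      rw [alternating_sum_choose_mul_choose hkw hks, alternating_sum_choose (by lia),
        sum_ite_eq_of_mem' _ _ _ (self_mem_range_succ s)]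
      ring

lemma choose_mul_choose_three_mul {q : ℕ} (hq : 0 < q) {w : ℕ} (hw : 3 ≤ w) :
    ((q + 1).choose w : ℚ) * w.choose 3 * 3 =
      (q + 1).choose 2 * (q - 1) * (q - 2).choose (w - 3) := by
  have h_mul : (q + 1).choose w * w.choose 3 = (q + 1).choose 3 * (q - 2).choose (w - 3) :=
    Nat.choose_mul hw
  have h_succ : (q + 1).choose 3 * 3 = (q + 1).choose 2 * (q - 1) :=
    Nat.choose_succ_right_eq (q + 1) 2
  rw [← Nat.cast_pred hq]
  norm_cast
  rw [h_mul, mul_right_comm, h_succ]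

end Binomial

section Code

variable {F : Type*} [Field F] [DecidableEq F] {n : ℕ} {C : Submodule F (Fin n → F)}

/-- Puncturing of the code `C`: the restriction of its codewords to the coordinates outside `S`. Its
fibers count the codewords that agree with a given vector off `S`. -/
def puncture (C : Submodule F (Fin n → F)) (S : Finset (Fin n)) : C →ₗ[F] ({i // i ∉ S} → F) :=
  LinearMap.funLeft F F Subtype.val ∘ₗ C.subtype

lemma puncture_eq_neg_iff {S : Finset (Fin n)} {c : C} {y : Fin n → F} :
    puncture C S c = -LinearMap.funLeft F F Subtype.val y ↔
      suppFinset (c + y : Fin n → F) ⊆ S := by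
  simp [funext_iff, puncture, LinearMap.funLeft_apply, suppFinset_subset_iff,
    add_eq_zero_iff_eq_neg]

variable [Fintype F] {d : ℕ}

lemma HasMinDist.le_card_of_suppFinset_subset (hmin : HasMinDist C d) {c : C} (hc : c ≠ 0)
    {S : Finset (Fin n)} (hS : suppFinset (c : Fin n → F) ⊆ S) : d ≤ #S :=
  (hmin.1 c c.2 (by simpa using hc)).trans (card_le_card hS)

lemma HasMinDist.puncture_injective (hmin : HasMinDist C d) {S : Finset (Fin n)} (hS : #S < d) :
    Function.Injective (puncture C S) := by
  rw [injective_iff_map_eq_zero]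
  intro c hc
  by_contra hne
  have h_supp : suppFinset (c : Fin n → F) ⊆ S :=
    suppFinset_subset_iff.mpr fun i hi ↦ congrFun hc ⟨i, hi⟩
  exact hS.not_ge (hmin.le_card_of_suppFinset_subset hne h_supp)

lemma HasMinDist.puncture_surjective (hmin : HasMinDist C d)
    (hk : Module.finrank F C + d = n + 1) {S : Finset (Fin n)} (hS : d ≤ #S + 1) :
    Function.Surjective (puncture C S) := by
  have h_finrank : Module.finrank F C ≤ n := by simpa using C.finrank_le
  obtain ⟨R, hRS, hR⟩ := exists_subset_card_eq (show d - 1 ≤ #S by lia)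
  have h_finrank_eq : Module.finrank F C = Module.finrank F ({i // i ∉ R} → F) := by
    rw [Module.finrank_fintype_fun_eq_card, Fintype.card_subtype_compl, Fintype.card_fin,
      Fintype.card_coe]
    lia
  have h_surj : Function.Surjective (puncture C R) :=
    (LinearMap.injective_iff_surjective_of_finrank_eq_finrank h_finrank_eq).mp
      (hmin.puncture_injective (by lia))
  let incl : {i // i ∉ S} → {i // i ∉ R} := Subtype.map id fun i hi hiR ↦ hi (hRS hiR)
  have h_incl : Function.Injective incl := Subtype.map_injective _ Function.injective_id
  exact (LinearMap.funLeft_surjective_of_injective F F incl h_incl).comp h_surj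

lemma HasMinDist.eq_of_sub_mem (hmin : HasMinDist C d) {e e' : Fin n → F}
    (h_norm : hammingNorm e + hammingNorm e' < d) (h_mem : e' - e ∈ C) : e = e' := by
  by_contra hne
  have h_dist : hammingDist e e' = hammingNorm (e' - e) := by
    rw [hammingDist_eq_hammingNorm, neg_add_eq_sub]
  have h_le : hammingDist e e' ≤ hammingNorm e + hammingNorm e' := by
    simpa using hammingDist_triangle e 0 e'
  have h_ge := hmin.1 _ h_mem (sub_ne_zero.mpr (Ne.symm hne))
  lia

lemma cosetWeight_le_hammingNorm {x e : Fin n → F} (h : x - e ∈ C) :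
    cosetWeight C x ≤ hammingNorm e :=
  Nat.sInf_le ⟨x - e, h, by rw [sub_sub_cancel]⟩

lemma exists_hammingNorm_eq_cosetWeight (C : Submodule F (Fin n → F)) (x : Fin n → F) :
    ∃ e, hammingNorm e = cosetWeight C x ∧ x - e ∈ C := by
  obtain ⟨c, hc, h⟩ : cosetWeight C x ∈ {m : ℕ | ∃ c ∈ C, hammingNorm (x - c) = m} :=
    Nat.sInf_mem ⟨_, 0, C.zero_mem, rfl⟩
  exact ⟨x - c, h, by rwa [sub_sub_cancel]⟩

lemma HasMinDist.cosetWeight_eq_iff (hmin : HasMinDist C d) {W : ℕ} (hW : 2 * W < d)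
    {x : Fin n → F} : cosetWeight C x = W ↔ ∃ e, hammingNorm e = W ∧ x - e ∈ C := by
  refine ⟨fun h ↦ h ▸ exists_hammingNorm_eq_cosetWeight C x, ?_⟩
  rintro ⟨e, rfl, he⟩
  obtain ⟨e', he', hxe'⟩ := exists_hammingNorm_eq_cosetWeight C x
  have h_le := cosetWeight_le_hammingNorm he
  have h_mem : e' - e ∈ C := by simpa using C.sub_mem he hxe'
  rw [hmin.eq_of_sub_mem (by lia) h_mem, he']

variable [DecidablePred (· ∈ C)]

variable (C) in
/-- The vectors of weight `W` in the coset `x + C`; when `W` is the weight of the coset, these are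
its coset leaders. -/
def cosetVectors (W : ℕ) (x : Fin n → F) : Finset (Fin n → F) :=
  {e | hammingNorm e = W ∧ x - e ∈ C}

lemma HasMinDist.card_cosetVectors (hmin : HasMinDist C d) {W : ℕ} (hW : 2 * W < d)
    (x : Fin n → F) : #(cosetVectors C W x) = if cosetWeight C x = W then 1 else 0 := by
  split_ifs with h
  · obtain ⟨e, he, hxe⟩ := (hmin.cosetWeight_eq_iff hW).mp h
    have h_mem : e ∈ cosetVectors C W x := by simp [cosetVectors, he, hxe]
    refine card_eq_one.mpr ⟨e, eq_singleton_iff_unique_mem.mpr ⟨h_mem, fun e' he' ↦ ?_⟩⟩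
    simp only [cosetVectors, mem_filter, mem_univ, true_and] at he'
    exact hmin.eq_of_sub_mem (by lia) (by simpa using C.sub_mem he'.2 hxe)
  · rw [hmin.cosetWeight_eq_iff hW] at h
    simpa [cosetVectors, filter_eq_empty_iff] using h

lemma HasMinDist.numVectorsCosetExact_eq_sum (hmin : HasMinDist C d) {W : ℕ} (hW : 2 * W < d)
    (w : ℕ) :
    numVectorsCosetExact C w W = ∑ x with hammingNorm x = w, #(cosetVectors C W x) := by
  simp only [hmin.card_cosetVectors hW, sum_boole, filter_filter, Nat.cast_id]
  rw [numVectorsCosetExact, ← Set.ncard_coe_finset, coe_filter_univ]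

lemma sum_card_cosetVectors_eq_sum_card (W : ℕ) (P : (Fin n → F) → Prop) [DecidablePred P] :
    ∑ x with P x, #(cosetVectors C W x) =
      ∑ c : C, #{e : Fin n → F | hammingNorm e = W ∧ P (c + e)} := by
  simp only [← card_sigma]
  refine card_bij' (fun p h ↦ ⟨⟨p.1 - p.2, ?_⟩, p.2⟩) (fun p _ ↦ ⟨p.1 + p.2, p.2⟩) ?_ ?_ ?_ ?_
  · simp only [cosetVectors, mem_sigma, mem_filter] at h
    exact h.2.2.2
  all_goals simp +contextual [cosetVectors]

lemma numCodewordsOfWeight_eq_sum (w : ℕ) :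
    numCodewordsOfWeight C w = ∑ x with hammingNorm x = w, if x ∈ C then 1 else 0 := by
  rw [← card_filter, filter_filter, numCodewordsOfWeight, ← Set.ncard_coe_finset, coe_filter_univ]
  simp only [and_comm]

lemma HasMinDist.card_filter_suppFinset_add_subset (hmin : HasMinDist C d)
    (hk : Module.finrank F C + d = n + 1) {S : Finset (Fin n)} (hS : d ≤ #S + 1)
    (y : Fin n → F) :
    #{c : C | suppFinset (c + y : Fin n → F) ⊆ S} = Fintype.card F ^ (#S + 1 - d) := by
  have h_surj := hmin.puncture_surjective hk hS
  have h_S : #S ≤ n := by simpa using card_le_univ S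
  have h_fiber (z : {i // i ∉ S} → F) : #{c : C | puncture C S c = z} =
      #{c : C | suppFinset (c + y : Fin n → F) ⊆ S} := by
    simp only [← puncture_eq_neg_iff]
    exact AddMonoidHom.card_fiber_eq_of_mem_range (puncture C S) (h_surj _) (h_surj _)
  have h_card : Fintype.card F ^ (n - #S) * #{c : C | suppFinset (c + y : Fin n → F) ⊆ S} =
      Fintype.card F ^ (n - #S) * Fintype.card F ^ (#S + 1 - d) := by
    calc
      _ = ∑ z : {i // i ∉ S} → F, #{c : C | puncture C S c = z} := by simp [h_fiber]
      _ = Fintype.card C := (card_eq_sum_card_fiberwise (by simp)).symm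
      _ = Fintype.card F ^ Module.finrank F C := Module.card_eq_pow_finrank
      _ = _ := by rw [← pow_add]; congr 1; lia
  exact Nat.eq_of_mul_eq_mul_left (pow_pos Fintype.card_pos _) h_card

/-- The truncated exponent is `0` for `#S < d`, when only the zero codeword is supported in `S`. -/
lemma HasMinDist.card_filter_suppFinset_subset (hmin : HasMinDist C d)
    (hk : Module.finrank F C + d = n + 1) (S : Finset (Fin n)) :
    #{c : C | suppFinset (c : Fin n → F) ⊆ S} = Fintype.card F ^ (#S + 1 - d) := by
  by_cases hS : d ≤ #S + 1
  · simpa using hmin.card_filter_suppFinset_add_subset hk hS 0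
  · have h_zero : ({c : C | suppFinset (c : Fin n → F) ⊆ S} : Finset C) = {0} := by
      ext c
      simp only [mem_filter, mem_univ, true_and, mem_singleton]
      refine ⟨fun hc ↦ by_contra fun hne ↦ ?_, by rintro rfl; simp [suppFinset]⟩
      have := hmin.le_card_of_suppFinset_subset hne hc
      lia
    rw [h_zero, card_singleton, Nat.sub_eq_zero_of_le (by lia), pow_zero]

lemma HasMinDist.sum_ite_mem (hmin : HasMinDist C d) (hk : Module.finrank F C + d = n + 1)
    (S : Finset (Fin n)) :
    (∑ x with suppFinset x ⊆ S, if x ∈ C then 1 else 0) = Fintype.card F ^ (#S + 1 - d) := by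
  rw [← hmin.card_filter_suppFinset_subset hk, ← card_filter, filter_comm, filter_filter]
  simp only [← Fintype.card_subtype]
  exact Fintype.card_congr (Equiv.subtypeSubtypeEquivSubtypeInter (· ∈ C) (suppFinset · ⊆ S)).symm

lemma HasMinDist.card_filter_card_suppFinset_sdiff_eq (hmin : HasMinDist C d)
    (hk : Module.finrank F C + d = n + 1) {S : Finset (Fin n)} {W : ℕ} (hSW : #S + W = d) :
    #{c : C | c ≠ 0 ∧ #(suppFinset c.1 \ S) = W} =
      (n - #S).choose W * (Fintype.card F - 1) := by
  have h_fiber (T : Finset (Fin n)) (hT : T ∈ Sᶜ.powersetCard W) :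
      #{c : C | (c ≠ 0 ∧ #(suppFinset c.1 \ S) = W) ∧ suppFinset c.1 \ S = T} =
        Fintype.card F - 1 := by
    obtain ⟨hTS, hTW⟩ := mem_powersetCard.mp hT
    have h_disj : Disjoint S T := disjoint_right.mpr fun i hi ↦ mem_compl.mp (hTS hi)
    have h_union : #(S ∪ T) = d := by rw [card_union_of_disjoint h_disj, hTW, hSW]
    have h_iff (c : C) (hc : c ≠ 0) : suppFinset c.1 \ S = T ↔ suppFinset c.1 ⊆ S ∪ T := by
      refine ⟨fun h ↦ by rw [← h, union_sdiff_self_eq_union]; exact subset_union_right, fun h ↦ ?_⟩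
      have h_supp : suppFinset c.1 = S ∪ T :=
        eq_of_subset_of_card_le h (h_union ▸ hmin.1 c c.2 (by simpa using hc))
      rw [h_supp, union_sdiff_cancel_left h_disj]
    have h_eq : ({c : C | (c ≠ 0 ∧ #(suppFinset c.1 \ S) = W) ∧
        suppFinset c.1 \ S = T} : Finset C) =
          ({c : C | suppFinset c.1 ⊆ S ∪ T} : Finset C).erase 0 := by
      ext c
      simp only [mem_filter, mem_univ, true_and, mem_erase]
      grind
    rw [h_eq, card_erase_of_mem (by simp [suppFinset]), hmin.card_filter_suppFinset_subset hk,
      h_union, Nat.add_sub_cancel_left, pow_one]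
  rw [card_eq_sum_card_fiberwise (f := fun c : C ↦ suppFinset c.1 \ S) (t := Sᶜ.powersetCard W)]
  · simp only [filter_filter, sum_congr rfl h_fiber]
    simp [card_compl]
  · intro c hc
    rw [mem_coe, mem_filter] at hc
    exact mem_powersetCard.mpr ⟨fun i hi ↦ mem_compl.mpr (mem_sdiff.mp hi).2, hc.2.2⟩

lemma HasMinDist.sum_card_cosetVectors_of_le_card_add_one (hmin : HasMinDist C d)
    (hk : Module.finrank F C + d = n + 1) {S : Finset (Fin n)} (hS : d ≤ #S + 1) (W : ℕ) :
    ∑ x with suppFinset x ⊆ S, #(cosetVectors C W x) =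
      n.choose W * (Fintype.card F - 1) ^ W * Fintype.card F ^ (#S + 1 - d) := by
  rw [sum_card_cosetVectors_eq_sum_card]
  calc
    _ = ∑ e : Fin n → F with hammingNorm e = W, #{c : C | suppFinset (c + e : Fin n → F) ⊆ S} := by
      simp only [← filter_filter]
      exact sum_card_bipartiteAbove_eq_sum_card_bipartiteBelow _
    _ = _ := by
      simp only [hmin.card_filter_suppFinset_add_subset hk hS, sum_const, smul_eq_mul,
        card_filter_hammingNorm_eq, Fintype.card_fin]

lemma HasMinDist.sum_card_cosetVectors_of_card_add_le (hmin : HasMinDist C d)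
    (hk : Module.finrank F C + d = n + 1) {S : Finset (Fin n)} {W : ℕ} (hSW : #S + W ≤ d) :
    ∑ x with suppFinset x ⊆ S, #(cosetVectors C W x) =
      (#S).choose W * (Fintype.card F - 1) ^ W +
        if #S + W = d then (n - #S).choose W * (Fintype.card F - 1) else 0 := by
  have h_le {c : C} (hc : c ≠ 0) : d ≤ #(suppFinset c.1 \ S) + #S := by
    rw [card_sdiff_add_card]
    exact hmin.le_card_of_suppFinset_subset hc subset_union_left
  have h_ne : ∑ c : C with c ≠ 0, #{e : Fin n → F | hammingNorm e = W ∧ suppFinset (c.1 + e) ⊆ S} =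
      #{c : C | c ≠ 0 ∧ #(suppFinset c.1 \ S) = W} := by
    rw [← filter_filter, card_filter]
    refine sum_congr rfl fun c hc ↦ ?_
    have := h_le (mem_filter.mp hc).2
    exact card_filter_hammingNorm_eq_and_suppFinset_add_subset (by lia)
  have h_zero : ∑ c : C with ¬c ≠ 0,
      #{e : Fin n → F | hammingNorm e = W ∧ suppFinset (c.1 + e) ⊆ S} =
        (#S).choose W * (Fintype.card F - 1) ^ W := by
    simp [filter_eq', and_comm, card_filter_suppFinset_subset_and_hammingNorm_eq]
  rw [sum_card_cosetVectors_eq_sum_card, ← sum_filter_not_add_sum_filter _ (· ≠ 0), h_zero, h_ne]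
  split_ifs with h_eq
  · rw [hmin.card_filter_card_suppFinset_sdiff_eq hk h_eq]
  · congr 1
    refine card_eq_zero.mpr (filter_eq_empty_iff.mpr fun c _ hc ↦ ?_)
    have := h_le hc.1
    lia

lemma HasMinDist.sum_card_cosetVectors_two_sub (hmin : HasMinDist C d)
    (hk : Module.finrank F C + d = n + 1) (S : Finset (Fin n)) :
    ∑ x with suppFinset x ⊆ S, ((#(cosetVectors C 2 x) : ℤ) -
        n.choose 2 * (Fintype.card F - 1) ^ 2 * if x ∈ C then 1 else 0) =
      if #S + 2 ≤ d then
        ((Fintype.card F : ℤ) - 1) ^ 2 * ((#S).choose 2 - n.choose 2) +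
          if #S + 2 = d then (Fintype.card F - 1 : ℤ) * (n - #S).choose 2 else 0
      else 0 := by
  have h_mem := congrArg (Nat.cast (R := ℤ)) (hmin.sum_ite_mem hk S)
  push_cast at h_mem
  rw [sum_sub_distrib, ← mul_sum, h_mem, ← Nat.cast_sum]
  by_cases h_le : #S + 2 ≤ d
  · rw [if_pos h_le, hmin.sum_card_cosetVectors_of_card_add_le hk h_le,
      show #S + 1 - d = 0 by lia]
    split_ifs <;> push_cast [Nat.cast_pred Fintype.card_pos] <;> ring
  · rw [if_neg h_le, hmin.sum_card_cosetVectors_of_le_card_add_one hk (by lia)]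
    push_cast [Nat.cast_pred Fintype.card_pos]
    ring

end Code

theorem numVectorsCosetExact_two_dist_five_general {F : Type*} [Field F] [Fintype F]
    [DecidableEq F] {n d w : ℕ} {C : Submodule F (Fin n → F)} (hmin : HasMinDist C d)
    (hk : Module.finrank F C + d = n + 1) (hd : 5 ≤ d) (hw : 3 ≤ w) :
    (numVectorsCosetExact C w 2 : ℤ) =
      n.choose 2 * (Fintype.card F - 1) ^ 2 *
        (numCodewordsOfWeight C w - (-1) ^ (w + d) *
          (n.choose w * (w - 1).choose (d - 2) - (n - 2).choose (w - 2) * (w - 3).choose (d - 4))) +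
      (-1) ^ (w + d) * (Fintype.card F - 1) *
        (n.choose w * w.choose (d - 2) * (n + 2 - d).choose 2) := by
  classical
  obtain ⟨s, rfl⟩ := Nat.exists_eq_add_of_le' (show 2 ≤ d by lia)
  have h_incl_excl := sum_filter_hammingNorm_eq_of_sum_suppFinset_subset
    (m := fun t ↦ if t ≤ s then (Fintype.card F - 1 : ℤ) ^ 2 * (t.choose 2 - n.choose 2) +
      if t = s then (Fintype.card F - 1 : ℤ) * (n - s).choose 2 else 0 else 0)
    (fun S ↦ (hmin.sum_card_cosetVectors_two_sub hk S).trans (by grind)) w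
  rw [alternating_sum_choose_mul_ite hw (by lia), sum_sub_distrib, ← mul_sum,
    Fintype.card_fin] at h_incl_excl
  have h_choose : (n.choose w : ℤ) * w.choose 2 = n.choose 2 * (n - 2).choose (w - 2) := by
    exact_mod_cast Nat.choose_mul (by lia)
  have h_sign : (-1 : ℤ) ^ (w + (s + 2)) = (-1) ^ (w + s) := by ring
  rw [hmin.numVectorsCosetExact_eq_sum (by lia), numCodewordsOfWeight_eq_sum, h_sign,
    Nat.add_sub_cancel, Nat.add_sub_add_right n 2 s, show s + 2 - 4 = s - 2 by lia]
  push_cast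
  linear_combination h_incl_excl +
    (-1) ^ (w + s) * (Fintype.card F - 1 : ℤ) ^ 2 * (w - 3).choose (s - 2) * h_choose

/-- **Integral weight spectrum of the weight-2 cosets of a `[q+1, q-3, 5]_q` MDS code**
(Theorem 5.3(ii), eq. (5.10)).  For a `[q+1,q-3,5]_q` MDS code and `3 ≤ w ≤ q+1`, as
rationals,
`A_w^Σ(V^{(2)}) = C(q+1,2)(q-1)²[ A_w(C)
  - (-1)^{w-5}( C(q+1,w)C(w-1,3) - C(q-1,w-2)C(w-3,1) )
  + (-1)^{w-5} (1/3) C(q-2,w-3) C(q-2,2) ]`. -/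
theorem numVectorsCosetExact_two_dist_five {F : Type*} [Field F] [Fintype F] [DecidableEq F]
    (q w : ℕ) (hq : Fintype.card F = q)
    (C : Submodule F (Fin (q + 1) → F))
    (hk : Module.finrank F C + 3 = q) (hmin : HasMinDist C 5)
    (hw1 : 3 ≤ w) (hwn : w ≤ q + 1) :
    (numVectorsCosetExact C w 2 : ℚ) =
      ((q + 1).choose 2 : ℚ) * ((q : ℚ) - 1) ^ 2 *
        ((numCodewordsOfWeight C w : ℚ)
          - (-1 : ℚ) ^ (w + 5) *
            (((q + 1).choose w : ℚ) * ((w - 1).choose 3 : ℚ)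
              - ((q - 1).choose (w - 2) : ℚ) * ((w - 3).choose 1 : ℚ))
          + (-1 : ℚ) ^ (w + 5) * (1 / 3) *
              ((q - 2).choose (w - 3) : ℚ) * ((q - 2).choose 2 : ℚ)) := by
  have h_general := congrArg (Int.cast (R := ℚ))
    (numVectorsCosetExact_two_dist_five_general hmin (by lia) le_rfl hw1)
  have h_choose := choose_mul_choose_three_mul (hq ▸ Fintype.card_pos : 0 < q) hw1
  rw [hq] at h_general
  push_cast [Nat.add_sub_add_right] at h_general
  linear_combination h_general + (-1) ^ (w + 5) * (q - 1 : ℚ) * (q - 2).choose 2 / 3 * h_choose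
end
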